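/- Let k ≥ 1 and let A·B be a rectangle in the graph G_k. Let I₁, I₂ ∈ A be two distinct useful sets and let J₁ ∈ B be such that I₁ ∪ J₁ is a canonical solution. Then J₁ is the only useful set in B. -/

import Mathlib

/-!
Write `I ∪ J = I_ρ` and `I' ∪ J' = I_ρ'` for two decompositions of canonical solutions by members
of a rectangle. If `ρ i ≠ ρ' i`, the two canonical solutions occupy complementary vertices of the
path of the variable `i`; consecutive vertices of the path are adjacent, so they must come from the
same side of the rectangle. Hence the whole path of `i` belongs to one side (`Apart.path_subset`).
If moreover `I ≠ I'`, some variable with `ρ i ≠ ρ' i` has its path on the side of `I`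
(`Apart.exists_owned`): when `I` and `I'` differ only in a clause vertex `w_l`, a literal of
`ρ'` satisfying the clause is adjacent to `w_l`, which determines its side.

If both sides had a second useful set, there would be a variable `i` with its path in `I₁ ∪ I₂` and
a variable `j` with its path in `J₁ ∪ J₃`. Some clause on `i` and `j` is falsified by the
assignment `ρ₁` of `I₁ ∪ J₁`, so its vertex lies in `I₁` or in `J₁`. It has a neighbour on both
paths, one of which lies on the opposite side, a contradiction.
-/

/-- A 2-CNF clause on `k` variables: an ordered pair of variables `a < b` together
with negation flags `na`, `nb`. There are `q = 4·C(k,2) = 2k(k-1)` such clauses. -/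
structure ClauseT (k : ℕ) where
  a : Fin k
  b : Fin k
  na : Bool
  nb : Bool
  hab : a < b

/-- The column index `2(l-1) + n` of the copy of a literal associated with the `l`-th
clause (`l` zero-indexed here), with negation flag `n`. -/
def litIdx (q : ℕ) (l : Fin q) (neg : Bool) : Fin (2 * q) :=
  ⟨2 * l.val + (if neg then 1 else 0), by have := l.isLt; split <;> omega⟩

/-- Vertices of the graph `G_k`: the literal vertices `v_{i,j}` (`i ∈ [k]`,
`j ∈ {0,…,2q-1}`) and the clause vertices `w_l` (`l ∈ [q]`). -/
abbrev Vtx (k q : ℕ) := (Fin k × Fin (2 * q)) ⊕ Fin q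

/-- Adjacency in `G_k`, for a given enumeration `w` of all 2-clauses:
(i) `v_{i,j-1} ~ v_{i,j}`; (ii) `w_l` is adjacent exactly to
`v_{a_l, 2(l-1)+na_l}` and `v_{b_l, 2(l-1)+nb_l}`. -/
def GAdj {k q : ℕ} (w : Fin q → ClauseT k) : Vtx k q → Vtx k q → Prop :=
  fun x y => match x, y with
  | Sum.inl (i, j), Sum.inl (i', j') =>
      i = i' ∧ (j.val + 1 = j'.val ∨ j'.val + 1 = j.val)
  | Sum.inl (i, j), Sum.inr l =>
      (i = (w l).a ∧ j = litIdx q l (w l).na) ∨ (i = (w l).b ∧ j = litIdx q l (w l).nb)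
  | Sum.inr l, Sum.inl (i, j) =>
      (i = (w l).a ∧ j = litIdx q l (w l).na) ∨ (i = (w l).b ∧ j = litIdx q l (w l).nb)
  | Sum.inr _, Sum.inr _ => False

/-- Independent sets of `G_k`. -/
def IndepSet {k q : ℕ} (w : Fin q → ClauseT k) (S : Set (Vtx k q)) : Prop :=
  ∀ u ∈ S, ∀ v ∈ S, ¬ GAdj w u v

/-- The canonical solution `I_ρ` for an assignment `ρ : [k] → {0,1}`: all literal
vertices `v_{i,j}` with `j ≡ ρ(i) (mod 2)`, together with all clause vertices `w_l`
whose clause is not satisfied by `ρ` (i.e. `ρ(a_l) ≠ na_l` and `ρ(b_l) ≠ nb_l`). -/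
def canonical {k q : ℕ} (w : Fin q → ClauseT k) (ρ : Fin k → Bool) : Set (Vtx k q) :=
  fun x => match x with
  | Sum.inl (i, j) => j.val % 2 = (if ρ i then 1 else 0)
  | Sum.inr l => ρ (w l).a ≠ (w l).na ∧ ρ (w l).b ≠ (w l).nb

/-- A rectangle `𝒜·ℬ` in `G_k`: two families of independent sets of `G_k` such that
every `A ∈ 𝒜` and `B ∈ ℬ` are disjoint and non-adjacent. -/
def IsRectangle {k q : ℕ} (w : Fin q → ClauseT k)
    (𝒜 ℬ : Set (Set (Vtx k q))) : Prop :=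
  (∀ A ∈ 𝒜, IndepSet w A) ∧ (∀ B ∈ ℬ, IndepSet w B) ∧
    ∀ A ∈ 𝒜, ∀ B ∈ ℬ, Disjoint A B ∧ ∀ u ∈ A, ∀ v ∈ B, ¬ GAdj w u v

/-- `A` is a useful set of the side `𝒜`: `A ∈ 𝒜` and `A ∪ B` is a canonical solution
for some `B ∈ ℬ`. -/
def UsefulA {k q : ℕ} (w : Fin q → ClauseT k) (𝒜 ℬ : Set (Set (Vtx k q)))
    (A : Set (Vtx k q)) : Prop :=
  A ∈ 𝒜 ∧ ∃ B ∈ ℬ, ∃ ρ : Fin k → Bool, A ∪ B = canonical w ρ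

/-- `B` is a useful set of the side `ℬ`. -/
def UsefulB {k q : ℕ} (w : Fin q → ClauseT k) (𝒜 ℬ : Set (Set (Vtx k q)))
    (B : Set (Vtx k q)) : Prop :=
  B ∈ ℬ ∧ ∃ A ∈ 𝒜, ∃ ρ : Fin k → Bool, A ∪ B = canonical w ρ

/-- Two vertex sets are disjoint and no edge of `G_k` joins them. -/
def Apart {k q : ℕ} (w : Fin q → ClauseT k) (A B : Set (Vtx k q)) : Prop :=
  ∀ u ∈ A, ∀ v ∈ B, u ≠ v ∧ ¬ GAdj w u v

theorem GAdj.symm {k q : ℕ} {w : Fin q → ClauseT k} {u v : Vtx k q} (h : GAdj w u v) :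
    GAdj w v u := by
  rcases u with ⟨i, j⟩ | l <;> rcases v with ⟨i', j'⟩ | l' <;> simp only [GAdj] at h ⊢
  · exact ⟨h.1.symm, h.2.symm⟩
  · exact h
  · exact h

theorem Apart.symm {k q : ℕ} {w : Fin q → ClauseT k} {A B : Set (Vtx k q)} (h : Apart w A B) :
    Apart w B A :=
  fun u hu v hv => ⟨(h v hv u hu).1.symm, fun e => (h v hv u hu).2 e.symm⟩

theorem IsRectangle.apart {k q : ℕ} {w : Fin q → ClauseT k} {𝒜 ℬ : Set (Set (Vtx k q))}
    (h : IsRectangle w 𝒜 ℬ) {A B : Set (Vtx k q)} (hA : A ∈ 𝒜) (hB : B ∈ ℬ) : Apart w A B :=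
  fun u hu v hv => ⟨Set.disjoint_iff_forall_ne.1 (h.2.2 A hA B hB).1 hu hv,
    (h.2.2 A hA B hB).2 u hu v hv⟩

theorem mem_canonical_inl {k q : ℕ} (w : Fin q → ClauseT k) (ρ : Fin k → Bool) (i : Fin k)
    (j : Fin (2 * q)) :
    (Sum.inl (i, j) : Vtx k q) ∈ canonical w ρ ↔ j.val % 2 = (if ρ i then 1 else 0) := Iff.rfl

theorem mem_canonical_inr {k q : ℕ} (w : Fin q → ClauseT k) (ρ : Fin k → Bool) (l : Fin q) :
    (Sum.inr l : Vtx k q) ∈ canonical w ρ ↔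
      ρ (w l).a ≠ (w l).na ∧ ρ (w l).b ≠ (w l).nb := Iff.rfl

theorem litIdx_mem_canonical {k q : ℕ} (w : Fin q → ClauseT k) (ρ : Fin k → Bool) (i : Fin k)
    (l : Fin q) : (Sum.inl (i, litIdx q l (ρ i)) : Vtx k q) ∈ canonical w ρ := by
  rw [mem_canonical_inl]
  simp only [litIdx]
  split <;> omega

/-- If two assignments differ at `i`, moving one step along the path of `i` turns a vertex of one
canonical solution into a vertex of the other. -/
theorem step_mem_canonical {k q : ℕ} {w : Fin q → ClauseT k} {ρ ρ' : Fin k → Bool} {i : Fin k}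
    (hi : ρ i ≠ ρ' i) {j j' : Fin (2 * q)} (hj : j.val + 1 = j'.val ∨ j'.val + 1 = j.val)
    (h : (Sum.inl (i, j) : Vtx k q) ∈ canonical w ρ) :
    (Sum.inl (i, j') : Vtx k q) ∈ canonical w ρ' := by
  rw [mem_canonical_inl] at h ⊢
  cases h1 : ρ i <;> cases h2 : ρ' i <;> simp_all <;> omega

/-- Consecutive vertices of the path of a variable on which the two assignments differ
are on the same side. -/
theorem Apart.step {k q : ℕ} {w : Fin q → ClauseT k} {I J I' J' : Set (Vtx k q)}
    {ρ ρ' : Fin k → Bool} (hI : I ∪ J = canonical w ρ) (hI' : I' ∪ J' = canonical w ρ')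
    (h1 : Apart w I J') (h2 : Apart w I' J) {i : Fin k} (hi : ρ i ≠ ρ' i) {j j' : Fin (2 * q)}
    (hj : j.val + 1 = j'.val ∨ j'.val + 1 = j.val)
    (h : (Sum.inl (i, j) : Vtx k q) ∈ I ∪ I') : (Sum.inl (i, j') : Vtx k q) ∈ I ∪ I' := by
  rcases h with h | h
  · have hm := step_mem_canonical hi hj (hI.subset (Or.inl h))
    rw [← hI'] at hm
    rcases hm with hm | hm
    · exact Or.inr hm
    · exact ((h1 _ h _ hm).2 ⟨rfl, hj⟩).elim
  · have hm := step_mem_canonical hi.symm hj (hI'.subset (Or.inl h))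
    rw [← hI] at hm
    rcases hm with hm | hm
    · exact Or.inl hm
    · exact ((h2 _ h _ hm).2 ⟨rfl, hj⟩).elim

theorem Apart.path_subset {k q : ℕ} {w : Fin q → ClauseT k} {I J I' J' : Set (Vtx k q)}
    {ρ ρ' : Fin k → Bool} (hI : I ∪ J = canonical w ρ) (hI' : I' ∪ J' = canonical w ρ')
    (h1 : Apart w I J') (h2 : Apart w I' J) {i : Fin k} (hi : ρ i ≠ ρ' i) {j : Fin (2 * q)}
    (h : (Sum.inl (i, j) : Vtx k q) ∈ I ∪ I') (j' : Fin (2 * q)) :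
    (Sum.inl (i, j') : Vtx k q) ∈ I ∪ I' := by
  have key : ∀ n (hn : n < 2 * q), (Sum.inl (i, ⟨n, hn⟩) : Vtx k q) ∈ I ∪ I' ↔
      (Sum.inl (i, ⟨0, by omega⟩) : Vtx k q) ∈ I ∪ I' := by
    intro n
    induction n with
    | zero => exact fun _ => Iff.rfl
    | succ n ih =>
      intro hn
      rw [← ih (by omega)]
      exact ⟨Apart.step hI hI' h1 h2 hi (Or.inr rfl), Apart.step hI hI' h1 h2 hi (Or.inl rfl)⟩
  exact (key j' j'.2).2 ((key j j.2).1 h)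

theorem Apart.exists_owned_of_not_subset {k q : ℕ} {w : Fin q → ClauseT k}
    {I J I' J' : Set (Vtx k q)}
    {ρ ρ' : Fin k → Bool} (hI : I ∪ J = canonical w ρ) (hI' : I' ∪ J' = canonical w ρ')
    (h1 : Apart w I J') (h2 : Apart w I' J) (hne : ¬ I ⊆ I') :
    ∃ i, ρ i ≠ ρ' i ∧ ∀ j, (Sum.inl (i, j) : Vtx k q) ∈ I ∪ I' := by
  obtain ⟨x, hx, hx'⟩ := Set.not_subset.1 hne
  have hxρ : x ∈ canonical w ρ := hI ▸ Or.inl hx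
  have hxρ' : x ∉ canonical w ρ' := by
    rw [← hI']
    rintro (h | h)
    · exact hx' h
    · exact (h1 x hx x h).1 rfl
  rcases x with ⟨i, j⟩ | l
  · have hi : ρ i ≠ ρ' i := fun e => hxρ' (by rwa [mem_canonical_inl, ← e])
    exact ⟨i, hi, Apart.path_subset hI hI' h1 h2 hi (Or.inl hx)⟩
  · -- A literal of `ρ'` that is a neighbour of `w_l ∈ I` cannot lie in `J'`.
    have lit : ∀ i, GAdj w (Sum.inr l) (Sum.inl (i, litIdx q l (ρ' i))) →
        (Sum.inl (i, litIdx q l (ρ' i)) : Vtx k q) ∈ I ∪ I' := by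
      intro i hadj
      have hm := litIdx_mem_canonical w ρ' i l
      rw [← hI'] at hm
      rcases hm with hm | hm
      · exact Or.inr hm
      · exact ((h1 _ hx _ hm).2 hadj).elim
    rw [mem_canonical_inr] at hxρ hxρ'
    by_cases ha : ρ' (w l).a = (w l).na
    · have hi : ρ (w l).a ≠ ρ' (w l).a := ha ▸ hxρ.1
      exact ⟨_, hi, Apart.path_subset hI hI' h1 h2 hi (lit _ (Or.inl ⟨rfl, by rw [ha]⟩))⟩
    · have hb : ρ' (w l).b = (w l).nb := by
        by_contra hb
        exact hxρ' ⟨ha, hb⟩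
      have hi : ρ (w l).b ≠ ρ' (w l).b := hb ▸ hxρ.2
      exact ⟨_, hi, Apart.path_subset hI hI' h1 h2 hi (lit _ (Or.inr ⟨rfl, by rw [hb]⟩))⟩

theorem Apart.exists_owned {k q : ℕ} {w : Fin q → ClauseT k} {I J I' J' : Set (Vtx k q)}
    {ρ ρ' : Fin k → Bool} (hI : I ∪ J = canonical w ρ) (hI' : I' ∪ J' = canonical w ρ')
    (h1 : Apart w I J') (h2 : Apart w I' J) (hne : I ≠ I') :
    ∃ i, ρ i ≠ ρ' i ∧ ∀ j, (Sum.inl (i, j) : Vtx k q) ∈ I ∪ I' := by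
  by_cases h : I ⊆ I'
  · have h' : ¬ I' ⊆ I := fun h' => hne (h.antisymm h')
    obtain ⟨i, hi, hj⟩ := Apart.exists_owned_of_not_subset hI' hI h2 h1 h'
    exact ⟨i, hi.symm, fun j => (hj j).symm⟩
  · exact Apart.exists_owned_of_not_subset hI hI' h1 h2 h

/-- Some clause on the distinct variables `i` and `j` is falsified by `ρ`, and its vertex has a
neighbour on each of the two paths. -/
theorem exists_falsified {k q : ℕ} {w : Fin q → ClauseT k} (hw : Function.Surjective w)
    (ρ : Fin k → Bool) {i j : Fin k} (hij : i ≠ j) :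
    ∃ l, (Sum.inr l : Vtx k q) ∈ canonical w ρ ∧
      (∃ m, GAdj w (Sum.inr l) (Sum.inl (i, m))) ∧ ∃ m, GAdj w (Sum.inr l) (Sum.inl (j, m)) := by
  rcases lt_or_gt_of_ne hij with h | h
  · obtain ⟨l, hl⟩ := hw ⟨i, j, !ρ i, !ρ j, h⟩
    refine ⟨l, ?_, ⟨litIdx q l (!ρ i), ?_⟩, ⟨litIdx q l (!ρ j), ?_⟩⟩
    · rw [mem_canonical_inr, hl]; simp
    · left; rw [hl]; exact ⟨rfl, rfl⟩
    · right; rw [hl]; exact ⟨rfl, rfl⟩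
  · obtain ⟨l, hl⟩ := hw ⟨j, i, !ρ j, !ρ i, h⟩
    refine ⟨l, ?_, ⟨litIdx q l (!ρ i), ?_⟩, ⟨litIdx q l (!ρ j), ?_⟩⟩
    · rw [mem_canonical_inr, hl]; simp
    · right; rw [hl]; exact ⟨rfl, rfl⟩
    · left; rw [hl]; exact ⟨rfl, rfl⟩

/-- Let `k ≥ 1` and let `𝒜·ℬ` be a rectangle in `G_k` (with
`q = 2k(k-1)` and `w` a bijective enumeration of all 2-clauses). Let `I₁, I₂ ∈ 𝒜` be
two distinct useful sets and let `J₁ ∈ ℬ` be such that `I₁ ∪ J₁` is a canonical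
solution. Then `J₁` is the only useful set in `ℬ`. -/
theorem stmt_17 (k q : ℕ) (hk : 1 ≤ k) (hq : q = 2 * k * (k - 1))
    (w : Fin q → ClauseT k) (hw : Function.Bijective w)
    (𝒜 ℬ : Set (Set (Vtx k q))) (hrect : IsRectangle w 𝒜 ℬ)
    (I₁ I₂ : Set (Vtx k q)) (hne : I₁ ≠ I₂)
    (hI₁ : UsefulA w 𝒜 ℬ I₁) (hI₂ : UsefulA w 𝒜 ℬ I₂)
    (J₁ : Set (Vtx k q)) (hJ₁ : J₁ ∈ ℬ)
    (hcanon : ∃ ρ : Fin k → Bool, I₁ ∪ J₁ = canonical w ρ) :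
    ∀ J : Set (Vtx k q), UsefulB w 𝒜 ℬ J → J = J₁ := by
  intro J₃ hJ₃
  by_contra hJne
  obtain ⟨hI₁, -⟩ := hI₁
  obtain ⟨hI₂, J₂, hJ₂, ρ₂, h₂⟩ := hI₂
  obtain ⟨hJ₃, I₃, hI₃, ρ₃, h₃⟩ := hJ₃
  obtain ⟨ρ₁, h₁⟩ := hcanon
  obtain ⟨i, -, hi⟩ :=
    Apart.exists_owned h₁ h₂ (hrect.apart hI₁ hJ₂) (hrect.apart hI₂ hJ₁) hne
  obtain ⟨j, -, hj⟩ := Apart.exists_owned (Set.union_comm I₁ J₁ ▸ h₁)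
    (Set.union_comm I₃ J₃ ▸ h₃) (hrect.apart hI₃ hJ₁).symm (hrect.apart hI₁ hJ₃).symm
    (Ne.symm hJne)
  have hA : Apart w (I₁ ∪ I₂) J₁ := by
    rintro u (hu | hu)
    · exact hrect.apart hI₁ hJ₁ u hu
    · exact hrect.apart hI₂ hJ₁ u hu
  have hB : Apart w (J₁ ∪ J₃) I₁ := by
    rintro u (hu | hu)
    · exact (hrect.apart hI₁ hJ₁).symm u hu
    · exact (hrect.apart hI₁ hJ₃).symm u hu
  have hq0 : 0 < q := by
    -- For `q = 0` the graph has no vertices, and `I₁ = I₂`.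
    by_contra h0
    obtain rfl : q = 0 := by omega
    exact hne (Set.ext fun x => by
      rcases x with ⟨-, n⟩ | l
      · exact (Nat.not_lt_zero _ n.2).elim
      · exact l.elim0)
  have hij : i ≠ j := by
    rintro rfl
    rcases hi ⟨0, by omega⟩ with ha | ha <;> rcases hj ⟨0, by omega⟩ with hb | hb
    · exact (hrect.apart hI₁ hJ₁ _ ha _ hb).1 rfl
    · exact (hrect.apart hI₁ hJ₃ _ ha _ hb).1 rfl
    · exact (hrect.apart hI₂ hJ₁ _ ha _ hb).1 rfl
    · exact (hrect.apart hI₂ hJ₃ _ ha _ hb).1 rfl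
  obtain ⟨l, hl, ⟨m, hm⟩, ⟨n, hn⟩⟩ := exists_falsified hw.surjective ρ₁ hij
  rw [← h₁] at hl
  rcases hl with hl | hl
  · exact (hB _ (hj n) _ hl).2 hn.symm
  · exact (hA _ (hi m) _ hl).2 hm.symm
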